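/- Let S ⊆ ℝ^n be an open convex set, m ≥ 1 an integer, and φ : S → [0,∞) a function such that φ^{1/m} is concave on S. Define, for p ∈ ℝ^n and r > 0, μ(B(p,r)) = ∫_{B(p,r) ∩ S} φ(u) du (integration with respect to n-dimensional Lebesgue measure, B(p,r) the Euclidean ball). Then for all x, y ∈ S, r > 0 and θ ∈ [0,1], μ(B(θx + (1−θ)y, r))^{1/(m+n)} ≥ θ·μ(B(x,r))^{1/(m+n)} + (1−θ)·μ(B(y,r))^{1/(m+n)}; that is, the function x ↦ μ(B(x,r)) is (m+n)-concave on S. -/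

import Mathlib

open Set MeasureTheory Metric

/-!
The one-dimensional Brunn–Minkowski inequality, applied to the superlevel sets of two functions
normalized to have supremum `1` and integrated over the levels, gives together with Hölder's
inequality the Borell–Brascamp–Lieb inequality on the line. By Tonelli it passes to products, each
real factor adding `1` to the exponent. Consequently integrating an `M`-concave function over an
`n`-dimensional variable leaves an `(M + n)`-concave function of the remaining variables; for the
function equal to `φ u` where `u ∈ S` and `‖u - p‖ ≤ r`, and to `0` elsewhere, this is the
concavity of `p ↦ μ(B(p, r))`.

This argument only compares points where the integrals are nonzero, and in `[0, ∞]`. To return to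
real integrals, note that a nonnegative concave function is bounded at any point of its domain by a
multiple of its value at a given interior point: hence `φ` is bounded on balls, and it vanishes
either everywhere or nowhere in the interior of `S`.
-/

open scoped ENNReal Pointwise

section PowerSums

/-- The `p`-sum `(x^{1/p} + y^{1/p})^p`, under which integrals of functions satisfying the
hypothesis of the Borell–Brascamp–Lieb inequality combine. -/
noncomputable def rpowAdd (p : ℝ) (x y : ℝ≥0∞) : ℝ≥0∞ :=
  (x ^ (1 / p) + y ^ (1 / p)) ^ p

variable {p q : ℝ}

lemma rpowAdd_one (x y : ℝ≥0∞) : rpowAdd 1 x y = x + y := by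
  simp [rpowAdd]

lemma rpowAdd_le_rpowAdd (hp : 0 ≤ p) {x x' y y' : ℝ≥0∞} (hx : x ≤ x') (hy : y ≤ y') :
    rpowAdd p x y ≤ rpowAdd p x' y' := by
  unfold rpowAdd
  gcongr

lemma rpow_mul_rpow_one_div (hp : 0 < p) (c x : ℝ≥0∞) :
    (c ^ p * x) ^ (1 / p) = c * x ^ (1 / p) := by
  rw [ENNReal.mul_rpow_of_nonneg _ _ (by positivity), ← ENNReal.rpow_mul,
    mul_one_div_cancel hp.ne', ENNReal.rpow_one]

lemma rpowAdd_rpow_mul (hp : 0 < p) (a b x y : ℝ≥0∞) :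
    rpowAdd p (a ^ p * x) (b ^ p * y) = (a * x ^ (1 / p) + b * y ^ (1 / p)) ^ p := by
  rw [rpowAdd, rpow_mul_rpow_one_div hp, rpow_mul_rpow_one_div hp]

lemma mul_rpowAdd (hp : 0 < p) (c x y : ℝ≥0∞) :
    c * rpowAdd p x y = rpowAdd p (c * x) (c * y) := by
  have hp' : 0 ≤ 1 / p := by positivity
  simp only [rpowAdd, ENNReal.mul_rpow_of_nonneg _ _ hp', ← mul_add,
    ENNReal.mul_rpow_of_nonneg _ _ hp.le, ← ENNReal.rpow_mul, one_div_mul_cancel hp.ne',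
    ENNReal.rpow_one]

lemma rpowAdd_ne_top (hp : 0 ≤ p) {x y : ℝ≥0∞} (hx : x ≠ ∞) (hy : y ≠ ∞) :
    rpowAdd p x y ≠ ∞ := by
  have hp' : 0 ≤ 1 / p := by positivity
  exact ENNReal.rpow_ne_top_of_nonneg hp <| ENNReal.add_ne_top.2
    ⟨ENNReal.rpow_ne_top_of_nonneg hp' hx, ENNReal.rpow_ne_top_of_nonneg hp' hy⟩

lemma rpowAdd_eq_zero_iff (hp : 0 < p) {x y : ℝ≥0∞} : rpowAdd p x y = 0 ↔ x = 0 ∧ y = 0 := by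
  simp [rpowAdd, ENNReal.rpow_eq_zero_iff, hp, hp.not_gt]

lemma rpowAdd_mul_mul_le (hp : 0 < p) (hq : 0 < q) (x y z w : ℝ≥0∞) :
    rpowAdd (p + q) (x * z) (y * w) ≤ rpowAdd p x y * rpowAdd q z w := by
  have hpq : 0 < p + q := by positivity
  have hconj : ((p + q) / p).HolderConjugate ((p + q) / q) := by
    refine Real.holderConjugate_iff.2 ⟨(one_lt_div hp).2 (by linarith), ?_⟩
    field_simp
  have hroot {s : ℝ} (hs : 0 < s) (v : ℝ≥0∞) :
      (v ^ (1 / (p + q))) ^ ((p + q) / s) = v ^ (1 / s) := by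
    rw [← ENNReal.rpow_mul]
    congr 1
    field_simp
  have hpow {s : ℝ} (hs : 0 < s) (v : ℝ≥0∞) : (v ^ (1 / ((p + q) / s))) ^ (p + q) = v ^ s := by
    rw [← ENNReal.rpow_mul]
    congr 1
    field_simp
  have hholder := ENNReal.inner_le_Lp_mul_Lq Finset.univ
    ![x ^ (1 / (p + q)), y ^ (1 / (p + q))] ![z ^ (1 / (p + q)), w ^ (1 / (p + q))] hconj
  simp only [Fin.sum_univ_two, Matrix.cons_val_zero, Matrix.cons_val_one, hroot hp, hroot hq]
    at hholder
  have hp' : 0 ≤ 1 / (p + q) := by positivity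
  simpa only [rpowAdd, ENNReal.mul_rpow_of_nonneg _ _ hp', ENNReal.mul_rpow_of_nonneg _ _ hpq.le,
    hpow hp, hpow hq] using ENNReal.rpow_le_rpow hholder hpq.le

end PowerSums

section RealLine

lemma volume_add_le_volume_add_of_isCompact {K L : Set ℝ} (hK : IsCompact K) (hL : IsCompact L)
    (hK₀ : K.Nonempty) (hL₀ : L.Nonempty) : volume K + volume L ≤ volume (K + L) := by
  obtain ⟨k, hkK, hk⟩ := hK.exists_isGreatest hK₀
  obtain ⟨l, hlL, hl⟩ := hL.exists_isLeast hL₀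
  have hdisj : AEDisjoint volume (l +ᵥ K) (k +ᵥ L) := by
    refine measure_mono_null ?_ (measure_singleton (k + l))
    rintro _ ⟨⟨u, hu, rfl⟩, v, hv, huv⟩
    have := hk hu
    have := hl hv
    simp only [vadd_eq_add, mem_singleton_iff] at huv ⊢
    linarith
  have hsub : (l +ᵥ K) ∪ (k +ᵥ L) ⊆ K + L := by
    rintro _ (⟨u, hu, rfl⟩ | ⟨v, hv, rfl⟩)
    · exact ⟨u, hu, l, hlL, add_comm _ _⟩
    · exact ⟨k, hkK, v, hv, rfl⟩
  calc volume K + volume L = volume (l +ᵥ K) + volume (k +ᵥ L) := by simp only [measure_vadd]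
    _ = volume ((l +ᵥ K) ∪ (k +ᵥ L)) :=
        (measure_union₀ (hL.vadd k).measurableSet.nullMeasurableSet hdisj).symm
    _ ≤ volume (K + L) := measure_mono hsub

lemma volume_add_le_volume_add {A B : Set ℝ} (hA : MeasurableSet A) (hB : MeasurableSet B)
    (hA₀ : A.Nonempty) (hB₀ : B.Nonempty) : volume A + volume B ≤ volume (A + B) := by
  obtain ⟨u, hu⟩ := hA₀
  obtain ⟨v, hv⟩ := hB₀
  rw [hA.measure_eq_iSup_isCompact, hB.measure_eq_iSup_isCompact]
  simp only [iSup_and']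
  refine ENNReal.biSup_add_biSup_le' ⟨∅, empty_subset _, isCompact_empty⟩
    ⟨∅, empty_subset _, isCompact_empty⟩ fun K hK L hL => ?_
  calc volume K + volume L ≤ volume (insert u K) + volume (insert v L) := by
        gcongr <;> exact subset_insert _ _
    _ ≤ volume (insert u K + insert v L) := volume_add_le_volume_add_of_isCompact
        (hK.2.insert u) (hL.2.insert v) (insert_nonempty _ _) (insert_nonempty _ _)
    _ ≤ volume (A + B) :=
        measure_mono <| add_subset_add (insert_subset hu hK.1) (insert_subset hv hL.1)

lemma volume_Ioi_inter_ofReal_lt (c : ℝ≥0∞) :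
    volume (Ioi (0 : ℝ) ∩ {t | ENNReal.ofReal t < c}) = c := by
  induction c with
  | top => simp
  | coe c =>
    have : Ioi (0 : ℝ) ∩ {t | ENNReal.ofReal t < c} = Ioo 0 (c : ℝ) := by
      ext t
      simp only [mem_inter_iff, mem_Ioi, mem_ofPred_eq, mem_Ioo, and_congr_right_iff]
      intro ht
      rw [ENNReal.ofReal_lt_iff_lt_toReal ht.le ENNReal.coe_ne_top, ENNReal.coe_toReal]
    simp [this]

lemma lintegral_eq_lintegral_measure_ofReal_lt {α : Type*} [MeasurableSpace α] (μ : Measure α)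
    [SFinite μ] {f : α → ℝ≥0∞} (hf : Measurable f) :
    ∫⁻ x, f x ∂μ = ∫⁻ t in Ioi (0 : ℝ), μ {x | ENNReal.ofReal t < f x} := by
  have hmeas : MeasurableSet {z : α × ℝ | ENNReal.ofReal z.2 < f z.1} :=
    measurableSet_lt measurable_snd.ennreal_ofReal (hf.comp measurable_fst)
  calc ∫⁻ x, f x ∂μ = ∫⁻ x, volume.restrict (Ioi 0) {t | ENNReal.ofReal t < f x} ∂μ := by
        refine lintegral_congr fun x => ?_
        rw [Measure.restrict_apply' measurableSet_Ioi, inter_comm, volume_Ioi_inter_ofReal_lt]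
    _ = (μ.prod (volume.restrict (Ioi 0))) {z : α × ℝ | ENNReal.ofReal z.2 < f z.1} :=
        (Measure.prod_apply hmeas).symm
    _ = ∫⁻ t in Ioi (0 : ℝ), μ {x | ENNReal.ofReal t < f x} := Measure.prod_apply_symm hmeas

lemma lintegral_add_le_of_min_le {f g h : ℝ → ℝ≥0∞} (hf : Measurable f) (hg : Measurable g)
    (hh : Measurable h) (hsup : ⨆ u, f u = ⨆ v, g v)
    (hfgh : ∀ u v, min (f u) (g v) ≤ h (u + v)) :
    (∫⁻ u, f u) + ∫⁻ v, g v ≤ ∫⁻ w, h w := by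
  have hlevel (t : ℝ) : volume {u | ENNReal.ofReal t < f u} + volume {v | ENNReal.ofReal t < g v} ≤
      volume {w | ENNReal.ofReal t < h w} := by
    rcases lt_or_ge (ENNReal.ofReal t) (⨆ u, f u) with ht | ht
    · refine (volume_add_le_volume_add (measurableSet_lt measurable_const hf)
        (measurableSet_lt measurable_const hg) (lt_iSup_iff.1 ht)
        (lt_iSup_iff.1 (ht.trans_eq hsup))).trans (measure_mono ?_)
      rintro _ ⟨u, hu, v, hv, rfl⟩
      exact (lt_min hu hv).trans_le (hfgh u v)
    · have hf₀ (u : ℝ) : ¬ ENNReal.ofReal t < f u := ((le_iSup f u).trans ht).not_gt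
      have hg₀ (v : ℝ) : ¬ ENNReal.ofReal t < g v :=
        ((le_iSup g v).trans (hsup.symm.trans_le ht)).not_gt
      simp [hf₀, hg₀]
  have hanti : Antitone fun t : ℝ => volume {u | ENNReal.ofReal t < f u} := fun s t hst =>
    measure_mono fun u hu => (ENNReal.ofReal_le_ofReal hst).trans_lt hu
  simp only [lintegral_eq_lintegral_measure_ofReal_lt volume hf,
    lintegral_eq_lintegral_measure_ofReal_lt volume hg,
    lintegral_eq_lintegral_measure_ofReal_lt volume hh]
  rw [← lintegral_add_left hanti.measurable]
  exact lintegral_mono hlevel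

end RealLine

section BorellBrascampLieb

/-- The Borell–Brascamp–Lieb inequality for a measure of dimension `d`, over all positive exponents
`M`. The two functions are compared with `h` only where they do not vanish, so that indicator
functions of convex sets are allowed. -/
def BorellBrascampLieb {E : Type*} [Add E] [MeasurableSpace E] (d : ℕ) (μ : Measure E) : Prop :=
  ∀ ⦃M : ℝ⦄, 0 < M → ∀ ⦃f g h : E → ℝ≥0∞⦄, Measurable f → Measurable g → Measurable h →
    (∀ u v, f u ≠ 0 → g v ≠ 0 → rpowAdd M (f u) (g v) ≤ h (u + v)) →
    ∫⁻ u, f u ∂μ ≠ 0 → ∫⁻ v, g v ∂μ ≠ 0 →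
    rpowAdd (M + d) (∫⁻ u, f u ∂μ) (∫⁻ v, g v ∂μ) ≤ ∫⁻ w, h w ∂μ

lemma rpowAdd_lintegral_le_of_iSup_ne_top {M : ℝ} (hM : 0 < M) {f g h : ℝ → ℝ≥0∞}
    (hf : Measurable f) (hg : Measurable g) (hh : Measurable h)
    (hfgh : ∀ u v, f u ≠ 0 → g v ≠ 0 → rpowAdd M (f u) (g v) ≤ h (u + v))
    (hf₀ : ⨆ u, f u ≠ 0) (hg₀ : ⨆ v, g v ≠ 0) (hf_top : ⨆ u, f u ≠ ∞) (hg_top : ⨆ v, g v ≠ ∞) :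
    rpowAdd (M + 1) (∫⁻ u, f u) (∫⁻ v, g v) ≤ ∫⁻ w, h w := by
  set p := ⨆ u, f u
  set q := ⨆ v, g v
  set c := rpowAdd M p q
  have hc₀ : c ≠ 0 := fun hc => hf₀ ((rpowAdd_eq_zero_iff hM).1 hc).1
  have hc_top : c ≠ ∞ := rpowAdd_ne_top hM.le hf_top hg_top
  have hmin (u v : ℝ) : min (f u / p) (g v / q) ≤ h (u + v) / c := by
    set t := min (f u / p) (g v / q)
    rcases eq_or_ne t 0 with ht | ht
    · simp [ht]
    have htf : t * p ≤ f u := ENNReal.mul_le_of_le_div (min_le_left _ _)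
    have htg : t * q ≤ g v := ENNReal.mul_le_of_le_div (min_le_right _ _)
    rw [ENNReal.le_div_iff_mul_le (.inl hc₀) (.inl hc_top), mul_rpowAdd hM]
    exact (rpowAdd_le_rpowAdd hM.le htf htg).trans <| hfgh u v
      (ne_bot_of_le_ne_bot (mul_ne_zero ht hf₀) htf) (ne_bot_of_le_ne_bot (mul_ne_zero ht hg₀) htg)
  have hsup : ⨆ u, f u / p = ⨆ v, g v / q := by
    rw [← ENNReal.iSup_div, ← ENNReal.iSup_div, ENNReal.div_self hf₀ hf_top,
      ENNReal.div_self hg₀ hg_top]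
  have hint : (∫⁻ u, f u) / p + (∫⁻ v, g v) / q ≤ (∫⁻ w, h w) / c := by
    simpa only [div_eq_mul_inv, lintegral_mul_const _, hf, hg, hh] using
      lintegral_add_le_of_min_le (hf.div_const p) (hg.div_const q) (hh.div_const c) hsup hmin
  calc rpowAdd (M + 1) (∫⁻ u, f u) (∫⁻ v, g v)
      = rpowAdd (M + 1) (p * ((∫⁻ u, f u) / p)) (q * ((∫⁻ v, g v) / q)) := by
        rw [ENNReal.mul_div_cancel hf₀ hf_top, ENNReal.mul_div_cancel hg₀ hg_top]
    _ ≤ c * ((∫⁻ u, f u) / p + (∫⁻ v, g v) / q) := by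
        simpa only [rpowAdd_one] using rpowAdd_mul_mul_le hM one_pos p q _ _
    _ ≤ c * ((∫⁻ w, h w) / c) := by gcongr
    _ = ∫⁻ w, h w := ENNReal.mul_div_cancel hc₀ hc_top

lemma tendsto_lintegral_min_natCast {α : Type*} [MeasurableSpace α] {μ : Measure α}
    {f : α → ℝ≥0∞} (hf : Measurable f) :
    Filter.Tendsto (fun N : ℕ => ∫⁻ x, min (f x) N ∂μ) Filter.atTop (nhds (∫⁻ x, f x ∂μ)) := by
  refine lintegral_tendsto_of_tendsto_of_monotone
    (fun N => (hf.min measurable_const).aemeasurable)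
    (.of_forall fun x N N' hN => min_le_min_left _ (by exact_mod_cast hN))
    (.of_forall fun x => ?_)
  simpa using (tendsto_const_nhds (x := f x)).min ENNReal.tendsto_nat_nhds_top

namespace BorellBrascampLieb

theorem volume_real : BorellBrascampLieb 1 (volume : Measure ℝ) := by
  intro M hM f g h hf hg hh hfgh hf₀ hg₀
  have hf_lim := tendsto_lintegral_min_natCast (μ := volume) hf
  have hg_lim := tendsto_lintegral_min_natCast (μ := volume) hg
  have hcont : Continuous fun z : ℝ≥0∞ × ℝ≥0∞ => rpowAdd (M + (1 : ℕ)) z.1 z.2 := by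
    unfold rpowAdd
    fun_prop
  refine le_of_tendsto ((hcont.tendsto _).comp (hf_lim.prodMk_nhds hg_lim)) ?_
  have hsup₀ {k : ℝ → ℝ≥0∞} (hk : ∫⁻ u, k u ≠ 0) : ⨆ u, k u ≠ 0 :=
    fun h0 => hk (by simp [ENNReal.iSup_eq_zero.1 h0])
  have hsup_top (k : ℝ → ℝ≥0∞) (N : ℕ) : ⨆ u, min (k u) N ≠ ∞ :=
    ne_top_of_le_ne_top (ENNReal.natCast_ne_top N) (iSup_le fun u => min_le_right _ _)
  filter_upwards [hf_lim.eventually_ne hf₀, hg_lim.eventually_ne hg₀] with N hfN hgN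
  rw [Function.comp_apply, Nat.cast_one]
  refine rpowAdd_lintegral_le_of_iSup_ne_top hM (hf.min measurable_const)
    (hg.min measurable_const) hh (fun u v hu hv => ?_) (hsup₀ hfN) (hsup₀ hgN)
    (hsup_top f N) (hsup_top g N)
  calc rpowAdd M (min (f u) N) (min (g v) N) ≤ rpowAdd M (f u) (g v) :=
        rpowAdd_le_rpowAdd hM.le (min_le_left _ _) (min_le_left _ _)
    _ ≤ h (u + v) := hfgh u v (fun h0 => hu (by simp [h0])) fun h0 => hv (by simp [h0])

variable {E F : Type*} [MeasurableSpace E] [MeasurableSpace F] {μ : Measure E} {ν : Measure F}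
  {d k : ℕ}

theorem dirac [AddZeroClass E] : BorellBrascampLieb 0 (Measure.dirac (0 : E)) := by
  intro M _ f g h hf hg hh hfgh hf₀ hg₀
  simp only [lintegral_dirac' _ hf, lintegral_dirac' _ hg, lintegral_dirac' _ hh, Nat.cast_zero,
    add_zero] at hf₀ hg₀ ⊢
  simpa using hfgh 0 0 hf₀ hg₀

theorem prod [Add E] [Add F] [SFinite ν] (hμ : BorellBrascampLieb d μ)
    (hν : BorellBrascampLieb k ν) : BorellBrascampLieb (d + k) (μ.prod ν) := by
  intro M hM f g h hf hg hh hfgh hf₀ hg₀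
  rw [lintegral_prod _ hf.aemeasurable] at hf₀ ⊢
  rw [lintegral_prod _ hg.aemeasurable] at hg₀ ⊢
  rw [lintegral_prod _ hh.aemeasurable, Nat.cast_add, add_comm (d : ℝ), ← add_assoc]
  refine hμ (by positivity) hf.lintegral_prod_right' hg.lintegral_prod_right'
    hh.lintegral_prod_right' (fun s t hs ht => ?_) hf₀ hg₀
  exact hν hM (hf.comp measurable_prodMk_left) (hg.comp measurable_prodMk_left)
    (hh.comp measurable_prodMk_left) (fun u v hu hv => hfgh (s, u) (t, v) hu hv) hs ht

theorem map [Add E] [Add F] (hμ : BorellBrascampLieb d μ) {e : E → F} (he : Measurable e)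
    (he_add : ∀ u v, e (u + v) = e u + e v) : BorellBrascampLieb d (μ.map e) := by
  intro M hM f g h hf hg hh hfgh hf₀ hg₀
  rw [lintegral_map hf he] at hf₀ ⊢
  rw [lintegral_map hg he] at hg₀ ⊢
  rw [lintegral_map hh he]
  refine hμ hM (hf.comp he) (hg.comp he) (hh.comp he) (fun u v hu hv => ?_) hf₀ hg₀
  simpa only [Function.comp_apply, he_add] using hfgh _ _ hu hv

theorem smul [Add E] (hμ : BorellBrascampLieb d μ) (c : ℝ≥0∞) :
    BorellBrascampLieb d (c • μ) := by
  intro M hM f g h hf hg hh hfgh hf₀ hg₀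
  simp only [lintegral_smul_measure, smul_eq_mul] at hf₀ hg₀ ⊢
  rw [← mul_rpowAdd (by positivity)]
  gcongr
  exact hμ hM hf hg hh hfgh (right_ne_zero_of_mul hf₀) (right_ne_zero_of_mul hg₀)

theorem volume_pi (n : ℕ) : BorellBrascampLieb n (volume : Measure (Fin n → ℝ)) := by
  induction n with
  | zero =>
    rw [MeasureTheory.volume_pi, Measure.pi_of_empty _ (0 : Fin 0 → ℝ)]
    exact dirac
  | succ n ih =>
    have hpres := (volume_preserving_piFinSuccAbove (fun _ : Fin (n + 1) => ℝ) 0).symm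
    have hpi := (volume_real.prod ih).map hpres.measurable fun u v => by
      ext i
      refine Fin.cases ?_ (fun j => ?_) i <;>
        simp [MeasurableEquiv.piFinSuccAbove, Fin.insertNthEquiv]
    rw [add_comm 1 n] at hpi
    exact hpres.map_eq ▸ hpi

end BorellBrascampLieb

variable {E : Type*} [NormedAddCommGroup E] [NormedSpace ℝ E] [FiniteDimensional ℝ E]
  [MeasurableSpace E] [BorelSpace E] (μ : Measure E) [μ.IsAddHaarMeasure]

theorem borellBrascampLieb_addHaar : BorellBrascampLieb (Module.finrank ℝ E) μ := by
  let e : (Fin (Module.finrank ℝ E) → ℝ) ≃L[ℝ] E := ContinuousLinearEquiv.ofFinrankEq (by simp)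
  have := e.isAddHaarMeasure_map volume
  rw [Measure.isAddLeftInvariant_eq_smul μ (volume.map e)]
  exact ((BorellBrascampLieb.volume_pi _).map e.continuous.measurable e.map_add).smul _

end BorellBrascampLieb

section PowConcave

/-- `M`-concavity of an extended nonnegative function: `F ^ (1 / M)` is concave on the set where
`F` does not vanish. -/
def PowConcave {V : Type*} [AddCommGroup V] [Module ℝ V] (M : ℝ) (F : V → ℝ≥0∞) : Prop :=
  ∀ ⦃u v : V⦄, F u ≠ 0 → F v ≠ 0 → ∀ ⦃a b : ℝ⦄, 0 < a → 0 < b → a + b = 1 →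
    ENNReal.ofReal a * F u ^ (1 / M) + ENNReal.ofReal b * F v ^ (1 / M) ≤
      F (a • u + b • v) ^ (1 / M)

lemma lintegral_rpow_mul_comp_inv_smul {E : Type*} [NormedAddCommGroup E] [NormedSpace ℝ E]
    [FiniteDimensional ℝ E] [MeasurableSpace E] [BorelSpace E] (μ : Measure E)
    [μ.IsAddHaarMeasure] (M : ℝ) {a : ℝ} (ha : 0 < a) {f : E → ℝ≥0∞} (hf : Measurable f) :
    ∫⁻ u, ENNReal.ofReal a ^ M * f (a⁻¹ • u) ∂μ =
      ENNReal.ofReal a ^ (M + Module.finrank ℝ E) * ∫⁻ u, f u ∂μ := by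
  have ha' : ENNReal.ofReal a ≠ 0 := by simpa using ha
  have hsmul : Measurable fun u : E => a⁻¹ • u := measurable_const_smul _
  have hscale : ENNReal.ofReal |((a⁻¹ : ℝ) ^ Module.finrank ℝ E)⁻¹| =
      ENNReal.ofReal a ^ (Module.finrank ℝ E : ℝ) := by
    rw [inv_pow, inv_inv, abs_of_pos (by positivity), ENNReal.ofReal_pow ha.le,
      ENNReal.rpow_natCast]
  calc ∫⁻ u, ENNReal.ofReal a ^ M * f (a⁻¹ • u) ∂μ
      = ENNReal.ofReal a ^ M * ∫⁻ u, f u ∂μ.map (a⁻¹ • ·) := by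
        rw [lintegral_map hf hsmul]
        exact lintegral_const_mul _ (hf.comp hsmul)
    _ = ENNReal.ofReal a ^ (M + Module.finrank ℝ E) * ∫⁻ u, f u ∂μ := by
        rw [Measure.map_addHaar_smul _ (inv_ne_zero ha.ne'), lintegral_smul_measure, smul_eq_mul,
          hscale, ← mul_assoc, ENNReal.rpow_add _ _ ha' ENNReal.ofReal_ne_top]

namespace PowConcave

variable {V : Type*} [AddCommGroup V] [Module ℝ V] {M : ℝ}

lemma indicator_ofReal_of_concaveOn {S : Set V} {φ : V → ℝ} (hM : 0 < M) (hφ₀ : ∀ u ∈ S, 0 ≤ φ u)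
    (hφ : ConcaveOn ℝ S fun u => φ u ^ (1 / M)) :
    PowConcave M (S.indicator fun u => ENNReal.ofReal (φ u)) := by
  intro u v hu hv a b ha hb hab
  have huS := mem_of_indicator_ne_zero hu
  have hvS := mem_of_indicator_ne_zero hv
  have hM' : 0 ≤ 1 / M := by positivity
  have hwS := hφ.1 huS hvS ha.le hb.le hab
  have hroot {p : V} (hp : p ∈ S) : 0 ≤ φ p ^ (1 / M) := Real.rpow_nonneg (hφ₀ p hp) _
  rw [indicator_of_mem huS, indicator_of_mem hvS, indicator_of_mem hwS,
    ENNReal.ofReal_rpow_of_nonneg (hφ₀ u huS) hM', ENNReal.ofReal_rpow_of_nonneg (hφ₀ v hvS) hM',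
    ← ENNReal.ofReal_mul ha.le, ← ENNReal.ofReal_mul hb.le,
    ← ENNReal.ofReal_add (mul_nonneg ha.le (hroot huS)) (mul_nonneg hb.le (hroot hvS)),
    ENNReal.ofReal_rpow_of_nonneg (hφ₀ _ hwS) hM']
  exact ENNReal.ofReal_le_ofReal (hφ.2 huS hvS ha.le hb.le hab)

lemma concaveOn_toReal {F : V → ℝ≥0∞} (hF : PowConcave M F) (hM : 0 < M) {S : Set V}
    (hS : Convex ℝ S) (hF₀ : ∀ p ∈ S, F p ≠ 0) (hF_top : ∀ p ∈ S, F p ≠ ∞) :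
    ConcaveOn ℝ S fun p => (F p).toReal ^ (1 / M) := by
  refine concaveOn_iff_forall_pos.2 ⟨hS, fun x hx y hy a b ha hb hab => ?_⟩
  have hM' : 0 ≤ 1 / M := by positivity
  have hroot {p : V} (hp : p ∈ S) : F p ^ (1 / M) ≠ ∞ :=
    ENNReal.rpow_ne_top_of_nonneg hM' (hF_top p hp)
  have hle := ENNReal.toReal_mono (hroot (hS hx hy ha.le hb.le hab))
    (hF (hF₀ x hx) (hF₀ y hy) ha hb hab)
  rw [ENNReal.toReal_add (ENNReal.mul_ne_top ENNReal.ofReal_ne_top (hroot hx))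
    (ENNReal.mul_ne_top ENNReal.ofReal_ne_top (hroot hy))] at hle
  simpa [← ENNReal.toReal_rpow, ha.le, hb.le] using hle

variable {E : Type*} [NormedAddCommGroup E] [NormedSpace ℝ E] [FiniteDimensional ℝ E]
  [MeasurableSpace E] [BorelSpace E] (μ : Measure E) [μ.IsAddHaarMeasure]

theorem lintegral_prodMk {F : V × E → ℝ≥0∞} (hF : PowConcave M F) (hM : 0 < M)
    (hF_meas : ∀ p, Measurable fun u => F (p, u)) :
    PowConcave (M + Module.finrank ℝ E) fun p => ∫⁻ u, F (p, u) ∂μ := by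
  intro x y hx hy a b ha hb hab
  have hMn : 0 < M + Module.finrank ℝ E := by positivity
  have hne {c : ℝ} (hc : 0 < c) (s : ℝ) : ENNReal.ofReal c ^ s ≠ 0 :=
    (ENNReal.rpow_pos (ENNReal.ofReal_pos.2 hc) ENNReal.ofReal_ne_top).ne'
  have hmeas {c : ℝ} (p : V) : Measurable fun u => ENNReal.ofReal c ^ M * F (p, c⁻¹ • u) :=
    ((hF_meas p).comp (measurable_const_smul _)).const_mul _
  -- The weights of a convex combination are absorbed by dilating the two slices.
  have hBBL := borellBrascampLieb_addHaar μ hM (hmeas (c := a) x) (hmeas (c := b) y)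
    (hF_meas (a • x + b • y)) fun u v hu hv => ?_
  · simp only [lintegral_rpow_mul_comp_inv_smul μ M ha (hF_meas x),
      lintegral_rpow_mul_comp_inv_smul μ M hb (hF_meas y)] at hBBL
    rw [rpowAdd_rpow_mul hMn, ← ENNReal.le_rpow_inv_iff hMn, ← one_div] at hBBL
    exact hBBL (mul_ne_zero (hne ha _) hx) (mul_ne_zero (hne hb _) hy)
  · rw [rpowAdd_rpow_mul hM, ← ENNReal.le_rpow_inv_iff hM, ← one_div]
    simpa [ha.ne', hb.ne'] using
      hF (right_ne_zero_of_mul hu) (right_ne_zero_of_mul hv) ha hb hab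

theorem setLIntegral_closedBall {f : E → ℝ≥0∞} (hf : PowConcave M f) (hM : 0 < M)
    (hf_meas : Measurable f) (r : ℝ) :
    PowConcave (M + Module.finrank ℝ E) fun p => ∫⁻ u in closedBall p r, f u ∂μ := by
  let F : E × E → ℝ≥0∞ := fun z => (closedBall z.1 r).indicator f z.2
  have hF : PowConcave M F := by
    intro z w hz hw a b ha hb hab
    have hz_mem : z.2 ∈ closedBall z.1 r := mem_of_indicator_ne_zero hz
    have hw_mem : w.2 ∈ closedBall w.1 r := mem_of_indicator_ne_zero hw
    have hmem : (a • z + b • w).2 ∈ closedBall (a • z + b • w).1 r := by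
      rw [mem_closedBall_iff_norm, ← mem_closedBall_zero_iff] at hz_mem hw_mem ⊢
      convert convex_closedBall (0 : E) r hz_mem hw_mem ha.le hb.le hab using 1
      simp only [Prod.fst_add, Prod.snd_add, Prod.smul_fst, Prod.smul_snd]
      module
    simp only [F, indicator_of_mem hz_mem, indicator_of_mem hw_mem, indicator_of_mem hmem]
      at hz hw ⊢
    exact hf hz hw ha hb hab
  simpa only [F, lintegral_indicator measurableSet_closedBall] using
    hF.lintegral_prodMk μ hM fun p => hf_meas.indicator measurableSet_closedBall

end PowConcave

end PowConcave

section ConcaveDensity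

/-- The density `φ` on `S` as an extended nonnegative function. Discarding the boundary of `S`,
which is null for convex `S`, makes it measurable when `φ` is continuous inside `S`. -/
noncomputable def interiorDensity {X : Type*} [TopologicalSpace X] (S : Set X) (φ : X → ℝ) :
    X → ℝ≥0∞ :=
  (interior S).indicator fun u => ENNReal.ofReal (φ u)

lemma measurable_interiorDensity {X : Type*} [TopologicalSpace X] [MeasurableSpace X]
    [OpensMeasurableSpace X] {S : Set X} {φ : X → ℝ} (hφ : ContinuousOn φ (interior S)) :
    Measurable (interiorDensity S φ) := by
  classical
  rw [interiorDensity, ← piecewise_eq_indicator]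
  exact (ENNReal.continuous_ofReal.comp_continuousOn hφ).measurable_piecewise
    continuousOn_const isOpen_interior.measurableSet

variable {E : Type*} [NormedAddCommGroup E] [NormedSpace ℝ E] {S : Set E} {M : ℝ}

-- `p` is a convex combination of `u` and of the point `q` of the ball opposite to `u`.
lemma mul_le_mul_of_concaveOn_of_closedBall_subset {ψ : E → ℝ} (hψ : ConcaveOn ℝ S ψ)
    (hψ₀ : ∀ u ∈ S, 0 ≤ ψ u) {p u : E} {ε : ℝ} (hε : 0 < ε) (hp : closedBall p ε ⊆ S)
    (hu : u ∈ S) : ε * ψ u ≤ (ε + dist u p) * ψ p := by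
  rcases eq_or_ne u p with rfl | hup
  · simp
  set d := dist u p
  have hd : 0 < d := dist_pos.2 hup
  set q := p + (ε / d) • (p - u) with hq
  have hqS : q ∈ S := hp <| by
    rw [mem_closedBall_iff_norm, hq, add_sub_cancel_left, norm_smul, ← dist_eq_norm, dist_comm,
      Real.norm_of_nonneg (by positivity), div_mul_cancel₀ _ hd.ne']
  have hcomb : (ε / (ε + d)) • u + (d / (ε + d)) • q = p := by
    rw [hq]
    match_scalars <;> field_simp <;> ring
  have hconc := hψ.2 hu hqS (show 0 ≤ ε / (ε + d) by positivity)
    (show 0 ≤ d / (ε + d) by positivity) (by field_simp)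
  rw [hcomb, smul_eq_mul, smul_eq_mul] at hconc
  have hle : ε / (ε + d) * ψ u ≤ ψ p :=
    (le_add_of_nonneg_right (mul_nonneg (by positivity) (hψ₀ q hqS))).trans hconc
  rwa [div_mul_eq_mul_div, div_le_iff₀ (by positivity), mul_comm (ψ p)] at hle

lemma le_rpow_mul_of_concaveOn_rpow {φ : E → ℝ} (hM : 0 < M) (hφ₀ : ∀ u ∈ S, 0 ≤ φ u)
    (hφ : ConcaveOn ℝ S fun u => φ u ^ (1 / M)) {p u : E} {ε : ℝ} (hε : 0 < ε)
    (hp : closedBall p ε ⊆ S) (hu : u ∈ S) : φ u ≤ (1 + dist u p / ε) ^ M * φ p := by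
  have hpS := hp (mem_closedBall_self hε.le)
  have hψ₀ : ∀ v ∈ S, 0 ≤ φ v ^ (1 / M) := fun v hv => Real.rpow_nonneg (hφ₀ v hv) _
  have hle := mul_le_mul_of_concaveOn_of_closedBall_subset hφ hψ₀ hε hp hu
  have hroot : φ u ^ M⁻¹ ≤ (1 + dist u p / ε) * φ p ^ M⁻¹ := by
    rw [one_div] at hle
    rw [one_add_div hε.ne', div_mul_eq_mul_div, le_div_iff₀ hε, mul_comm]
    exact hle
  rwa [Real.rpow_inv_le_iff_of_pos (hφ₀ u hu)
    (mul_nonneg (by positivity) (Real.rpow_nonneg (hφ₀ p hpS) _)) hM,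
    Real.mul_rpow (by positivity) (Real.rpow_nonneg (hφ₀ p hpS) _),
    Real.rpow_inv_rpow (hφ₀ p hpS) hM.ne'] at hroot

variable {φ : E → ℝ}

lemma powConcave_interiorDensity (hM : 0 < M) (hφ₀ : ∀ u ∈ S, 0 ≤ φ u)
    (hφ : ConcaveOn ℝ S fun u => φ u ^ (1 / M)) : PowConcave M (interiorDensity S φ) :=
  .indicator_ofReal_of_concaveOn hM (fun u hu => hφ₀ u (interior_subset hu))
    (hφ.subset interior_subset hφ.1.interior)

lemma setLIntegral_closedBall_interiorDensity_ne_zero [MeasurableSpace E]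
    [OpensMeasurableSpace E] (μ : Measure E) [μ.IsOpenPosMeasure] (hS : Convex ℝ S)
    (hφ : Measurable (interiorDensity S φ)) (hφ_pos : ∀ u ∈ interior S, 0 < φ u)
    (hS₀ : (interior S).Nonempty) {p : E} (hp : p ∈ S) {r : ℝ} (hr : 0 < r) :
    ∫⁻ u in closedBall p r, interiorDensity S φ u ∂μ ≠ 0 := by
  have hp_closure : p ∈ closure (interior S) :=
    hS.closure_interior_eq_closure_of_nonempty_interior hS₀ ▸ subset_closure hp
  have hne : (ball p r ∩ interior S).Nonempty :=
    mem_closure_iff_nhds.1 hp_closure _ (ball_mem_nhds p hr)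
  rw [← pos_iff_ne_zero, lintegral_pos_iff_support hφ,
    Measure.restrict_apply' measurableSet_closedBall]
  refine ((isOpen_ball.inter isOpen_interior).measure_pos μ hne).trans_le
    (measure_mono fun u hu => ⟨?_, ball_subset_closedBall hu.1⟩)
  simp [interiorDensity, hu.2, hφ_pos u hu.2]

lemma interiorDensity_eq_zero_or_pos (hM : 0 < M) (hφ₀ : ∀ u ∈ S, 0 ≤ φ u)
    (hφ : ConcaveOn ℝ S fun u => φ u ^ (1 / M)) :
    interiorDensity S φ = 0 ∨ (interior S).Nonempty ∧ ∀ u ∈ interior S, 0 < φ u := by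
  refine or_iff_not_imp_left.2 fun hne => ?_
  obtain ⟨u, hu⟩ := Function.ne_iff.1 hne
  have huS : u ∈ interior S := mem_of_indicator_ne_zero hu
  have hu_pos : 0 < φ u := by simpa [interiorDensity, huS] using hu
  refine ⟨⟨u, huS⟩, fun p hp => (hφ₀ p (interior_subset hp)).lt_of_ne fun hp₀ => ?_⟩
  obtain ⟨ε, hε, hpS⟩ := nhds_basis_closedBall.mem_iff.1 (mem_interior_iff_mem_nhds.1 hp)
  have hle := le_rpow_mul_of_concaveOn_rpow hM hφ₀ hφ hε hpS (interior_subset huS)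
  rw [← hp₀, mul_zero] at hle
  exact hu_pos.not_ge hle

lemma setLIntegral_interiorDensity_ne_top [ProperSpace E] [MeasurableSpace E]
    (μ : Measure E) [IsFiniteMeasureOnCompacts μ] (hM : 0 < M) (hφ₀ : ∀ u ∈ S, 0 ≤ φ u)
    (hφ : ConcaveOn ℝ S fun u => φ u ^ (1 / M)) (hS : (interior S).Nonempty) {A : Set E}
    (hA : Bornology.IsBounded A) : ∫⁻ u in A, interiorDensity S φ u ∂μ ≠ ∞ := by
  obtain ⟨p, hp⟩ := hS
  obtain ⟨ε, hε, hpS⟩ := nhds_basis_closedBall.mem_iff.1 (mem_interior_iff_mem_nhds.1 hp)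
  obtain ⟨R, hAR⟩ := hA.subset_closedBall p
  refine (setLIntegral_lt_top_of_le_nnreal hA.measure_lt_top.ne
    ⟨((1 + R / ε) ^ M * φ p).toNNReal, fun u hu => ?_⟩).ne
  refine indicator_apply_le' (fun huS => ENNReal.ofReal_le_ofReal ?_) fun _ => bot_le
  have hpφ := hφ₀ p (interior_subset hp)
  calc φ u ≤ (1 + dist u p / ε) ^ M * φ p :=
        le_rpow_mul_of_concaveOn_rpow hM hφ₀ hφ hε hpS (interior_subset huS)
    _ ≤ (1 + R / ε) ^ M * φ p := by
        gcongr
        exact hAR hu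

variable [FiniteDimensional ℝ E]

lemma continuousOn_interior_of_concaveOn_rpow (hM : 0 < M) (hφ₀ : ∀ u ∈ S, 0 ≤ φ u)
    (hφ : ConcaveOn ℝ S fun u => φ u ^ (1 / M)) : ContinuousOn φ (interior S) := by
  refine (hφ.continuousOn_interior.rpow_const fun _ _ => .inr hM.le).congr fun u hu => ?_
  simp only [one_div, Real.rpow_inv_rpow (hφ₀ u (interior_subset hu)) hM.ne']

variable [MeasurableSpace E] [BorelSpace E] (μ : Measure E) [μ.IsAddHaarMeasure]

lemma setIntegral_inter_eq_toReal_setLIntegral_interiorDensity (hS : Convex ℝ S)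
    (hφ₀ : ∀ u ∈ S, 0 ≤ φ u) (hφ : ContinuousOn φ (interior S)) {A : Set E}
    (hA : MeasurableSet A) :
    ∫ u in A ∩ S, φ u ∂μ = (∫⁻ u in A, interiorDensity S φ u ∂μ).toReal := by
  have hint : MeasurableSet (interior S) := isOpen_interior.measurableSet
  have hS_ae : (A ∩ interior S : Set E) =ᵐ[μ] (A ∩ S : Set E) :=
    (ae_eq_refl A).inter (interior_ae_eq_of_null_frontier (hS.addHaar_frontier μ))
  rw [← setIntegral_congr_set hS_ae, integral_eq_lintegral_of_nonneg_ae, interiorDensity,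
    setLIntegral_indicator hint, inter_comm]
  · exact (ae_restrict_iff' (hA.inter hint)).2
      (.of_forall fun u hu => hφ₀ u (interior_subset hu.2))
  · exact (hφ.mono inter_subset_right).aestronglyMeasurable (hA.inter hint)

end ConcaveDensity

theorem ball_measure_is_m_plus_n_concave_general {E : Type*} [NormedAddCommGroup E]
    [NormedSpace ℝ E] [FiniteDimensional ℝ E] [MeasurableSpace E] [BorelSpace E] (μ : Measure E)
    [μ.IsAddHaarMeasure] {M : ℝ} (hM : 0 < M) {S : Set E} {φ : E → ℝ}
    (hφ_nonneg : ∀ u ∈ S, 0 ≤ φ u) (hφ_conc : ConcaveOn ℝ S fun u => φ u ^ (1 / M))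
    {r : ℝ} (hr : 0 < r) :
    ConcaveOn ℝ S fun p =>
      (∫ u in closedBall p r ∩ S, φ u ∂μ) ^ (1 / (M + Module.finrank ℝ E)) := by
  have hS := hφ_conc.1
  have hcont := continuousOn_interior_of_concaveOn_rpow hM hφ_nonneg hφ_conc
  have hmeas := measurable_interiorDensity hcont
  simp only [setIntegral_inter_eq_toReal_setLIntegral_interiorDensity μ hS hφ_nonneg hcont
    measurableSet_closedBall]
  have hconc := (powConcave_interiorDensity hM hφ_nonneg hφ_conc).setLIntegral_closedBall μ hM
    hmeas r
  have hMn : 0 < M + Module.finrank ℝ E := by positivity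
  rcases interiorDensity_eq_zero_or_pos hM hφ_nonneg hφ_conc with hzero | ⟨hS₀, hφ_pos⟩
  · simpa [hzero, hMn.ne'] using concaveOn_const 0 hS
  · exact hconc.concaveOn_toReal hMn hS
      (fun p hp => setLIntegral_closedBall_interiorDensity_ne_zero μ hS hmeas hφ_pos hS₀ hp hr)
      fun p _ => setLIntegral_interiorDensity_ne_top μ hM hφ_nonneg hφ_conc hS₀ isBounded_closedBall

/-- (Generalized Prékopa–Leindler consequence.) Let `S ⊆ ℝ^n` be an open convex set and
`φ : S → [0,∞)` an `m`-concave function (`φ^{1/m}` concave). Then the function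
`x ↦ μ(B(x,r)) = ∫_{B(x,r) ∩ S} φ` is `(m+n)`-concave on `S`: for `x, y ∈ S`, `r > 0`
and `θ ∈ [0,1]`,
`μ(B(θx+(1−θ)y, r))^{1/(m+n)} ≥ θ·μ(B(x,r))^{1/(m+n)} + (1−θ)·μ(B(y,r))^{1/(m+n)}`. -/
theorem ball_measure_is_m_plus_n_concave
    (n m : ℕ) (hm : 1 ≤ m)
    (S : Set (EuclideanSpace ℝ (Fin n)))
    (hSopen : IsOpen S) (hSconv : Convex ℝ S)
    (φ : EuclideanSpace ℝ (Fin n) → ℝ)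
    (hφ_nonneg : ∀ u ∈ S, 0 ≤ φ u)
    (hφ_conc : ConcaveOn ℝ S (fun u => φ u ^ ((1 : ℝ) / m)))
    (x y : EuclideanSpace ℝ (Fin n)) (hx : x ∈ S) (hy : y ∈ S)
    (r : ℝ) (hr : 0 < r)
    (θ : ℝ) (hθ : θ ∈ Icc (0 : ℝ) 1) :
    θ * (∫ u in closedBall x r ∩ S, φ u) ^ ((1 : ℝ) / (m + n)) +
        (1 - θ) * (∫ u in closedBall y r ∩ S, φ u) ^ ((1 : ℝ) / (m + n)) ≤
      (∫ u in closedBall (θ • x + (1 - θ) • y) r ∩ S, φ u) ^ ((1 : ℝ) / (m + n)) := by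
  have hconc := ball_measure_is_m_plus_n_concave_general volume (by positivity : (0 : ℝ) < m)
    hφ_nonneg hφ_conc hr
  simpa using hconc.2 hx hy hθ.1 (sub_nonneg.2 hθ.2) (add_sub_cancel θ 1)
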